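/- arXiv:2310.14440 — 6 statements merged into one kernel-verified Lean document; each statement's English description precedes it below -/
import Mathlib

section
/- Let a, d : ℝ → ℝ be differentiable with a(t) ≠ 0 for all t, let b, c : ℝ → ℝ, and let μ : ℝ → ℝ be twice differentiable with μ(t) ≠ 0 for all t. Define α(t) = μ'(t)/(4a(t)μ(t)) − d(t)/(2a(t)). Then α satisfies the Riccati equation α' + b + 2cα + 4aα² = 0 on ℝ if and only if μ satisfies the characteristic equation μ'' − η·μ' + 4σ·μ = 0 on ℝ, where η(t) = a'(t)/a(t) − 2c(t) + 4d(t) and σ(t) = a(t)b(t) − c(t)d(t) + d(t)² + d(t)a'(t)/(2a(t)) − d'(t)/2. -/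
/-!
The logarithmic derivative `u = μ'/μ` turns the linear equation `μ'' + p μ' + q μ = 0` into the
Riccati equation `u' + u² + p u + q = 0`, because `u' = μ''/μ - u²`. An affine change of unknown
`u = f v + g` carries this into a Riccati equation for `v`. The formula for `α` says precisely that
`u = 4 a α + 2 d`, and `η`, `σ` are the coefficients for which the equation for `v = α` is the
given one.
-/

open scoped Topology

section

variable {𝕜 𝕜' : Type*} [NontriviallyNormedField 𝕜] [NontriviallyNormedField 𝕜']
  [NormedAlgebra 𝕜 𝕜'] {t : 𝕜}

theorem deriv_logDeriv {μ : 𝕜 → 𝕜'} (hμ : DifferentiableAt 𝕜 μ t)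
    (hμ' : DifferentiableAt 𝕜 (deriv μ) t) (hμt : μ t ≠ 0) :
    deriv (logDeriv μ) t = deriv (deriv μ) t / μ t - logDeriv μ t ^ 2 := by
  rw [logDeriv, deriv_div hμ' hμ hμt, Pi.div_apply]
  field_simp

theorem linear_eq_zero_iff_riccati_logDeriv {μ : 𝕜 → 𝕜'} (hμ : DifferentiableAt 𝕜 μ t)
    (hμ' : DifferentiableAt 𝕜 (deriv μ) t) (hμt : μ t ≠ 0) (p q : 𝕜') :
    deriv (deriv μ) t + p * deriv μ t + q * μ t = 0 ↔
      deriv (logDeriv μ) t + logDeriv μ t ^ 2 + p * logDeriv μ t + q = 0 := by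
  have factor : deriv (deriv μ) t + p * deriv μ t + q * μ t =
      μ t * (deriv (logDeriv μ) t + logDeriv μ t ^ 2 + p * logDeriv μ t + q) := by
    rw [deriv_logDeriv hμ hμ' hμt, logDeriv_apply]
    field_simp
    ring
  rw [factor, mul_eq_zero_iff_left hμt]

theorem riccati_affine_iff {f g v : 𝕜 → 𝕜'} (hf : DifferentiableAt 𝕜 f t)
    (hg : DifferentiableAt 𝕜 g t) (hv : DifferentiableAt 𝕜 v t) (hft : f t ≠ 0) (p q : 𝕜') :
    deriv (f * v + g) t + (f * v + g) t ^ 2 + p * (f * v + g) t + q = 0 ↔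
      deriv v t + f t * v t ^ 2 + (deriv f t / f t + 2 * g t + p) * v t +
        (deriv g t + g t ^ 2 + p * g t + q) / f t = 0 := by
  have factor : deriv (f * v + g) t + (f * v + g) t ^ 2 + p * (f * v + g) t + q =
      f t * (deriv v t + f t * v t ^ 2 + (deriv f t / f t + 2 * g t + p) * v t +
        (deriv g t + g t ^ 2 + p * g t + q) / f t) := by
    rw [deriv_add (hf.mul hv) hg, deriv_mul hf hv, Pi.add_apply, Pi.mul_apply]
    field_simp
    ring
  rw [factor, mul_eq_zero_iff_left hft]

theorem stmt_1_general [NeZero (2 : 𝕜')] {a d μ α : 𝕜 → 𝕜'} {b c η σ : 𝕜'}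
    (ha : DifferentiableAt 𝕜 a t) (hd : DifferentiableAt 𝕜 d t) (hat : a t ≠ 0)
    (hμ : DifferentiableAt 𝕜 μ t) (hμ' : DifferentiableAt 𝕜 (deriv μ) t) (hμt : μ t ≠ 0)
    (hα : ∀ᶠ s in 𝓝 t, α s = deriv μ s / (4 * a s * μ s) - d s / (2 * a s))
    (hη : η = deriv a t / a t - 2 * c + 4 * d t)
    (hσ : σ = a t * b - c * d t + d t ^ 2 + d t * deriv a t / (2 * a t) - deriv d t / 2) :
    deriv α t + b + 2 * c * α t + 4 * a t * α t ^ 2 = 0 ↔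
      deriv (deriv μ) t - η * deriv μ t + 4 * σ * μ t = 0 := by
  have two_ne : (2 : 𝕜') ≠ 0 := two_ne_zero
  have four_eq : (4 : 𝕜') = 2 * 2 := by norm_num
  have four_ne : (4 : 𝕜') ≠ 0 := four_eq ▸ mul_ne_zero two_ne two_ne
  have four_mul_ne : 4 * a t ≠ 0 := mul_ne_zero four_ne hat
  have α_differentiable : DifferentiableAt 𝕜 α t :=
    ((hμ'.fun_div ((ha.const_mul 4).fun_mul hμ) (mul_ne_zero four_mul_ne hμt)).fun_sub
      (hd.fun_div (ha.const_mul 2) (mul_ne_zero two_ne hat))).congr_of_eventuallyEq hα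
  have logDeriv_eq : logDeriv μ =ᶠ[𝓝 t] (fun s ↦ 4 * a s) * α + fun s ↦ 2 * d s := by
    filter_upwards [hα, ha.continuousAt.eventually_ne hat,
      hμ.continuousAt.eventually_ne hμt] with s hαs has hμs
    simp only [logDeriv_apply, Pi.add_apply, Pi.mul_apply, hαs, four_eq]
    field_simp
    ring
  have linear_coeff : deriv (fun s ↦ 4 * a s) t / (4 * a t) + 2 * (2 * d t) + -η = 2 * c := by
    rw [deriv_const_mul _ ha, hη, mul_div_mul_left _ _ four_ne]
    ring
  have constant_coeff :
      (deriv (fun s ↦ 2 * d s) t + (2 * d t) ^ 2 + -η * (2 * d t) + 4 * σ) / (4 * a t) = b := by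
    rw [deriv_const_mul _ hd, hη, hσ, four_eq]
    field_simp
    ring
  rw [sub_eq_add_neg, ← neg_mul, linear_eq_zero_iff_riccati_logDeriv hμ hμ' hμt,
    logDeriv_eq.deriv_eq, logDeriv_eq.eq_of_nhds,
    riccati_affine_iff (ha.const_mul 4) (hd.const_mul 2) α_differentiable four_mul_ne,
    linear_coeff, constant_coeff]
  exact Eq.congr_left (by ring)

end

/-- Substitution lemma: the Riccati equation for α is equivalent to the
second-order linear characteristic equation for μ. -/
theorem stmt_1
    (a d : ℝ → ℝ) (ha : Differentiable ℝ a) (hd : Differentiable ℝ d)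
    (hane : ∀ t, a t ≠ 0)
    (b c : ℝ → ℝ)
    (μ : ℝ → ℝ) (hμ : Differentiable ℝ μ) (hμ' : Differentiable ℝ (deriv μ))
    (hμne : ∀ t, μ t ≠ 0)
    (α : ℝ → ℝ)
    (hα : ∀ t, α t = deriv μ t / (4 * a t * μ t) - d t / (2 * a t))
    (η σ : ℝ → ℝ)
    (hη : ∀ t, η t = deriv a t / a t - 2 * c t + 4 * d t)
    (hσ : ∀ t, σ t = a t * b t - c t * d t + d t ^ 2
        + d t * deriv a t / (2 * a t) - deriv d t / 2) :
    (∀ t, deriv α t + b t + 2 * c t * α t + 4 * a t * α t ^ 2 = 0) ↔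
      (∀ t, deriv (deriv μ) t - η t * deriv μ t + 4 * σ t * μ t = 0) :=
  forall_congr' fun t ↦ stmt_1_general (ha t) (hd t) (hane t) (hμ t) (hμ' t) (hμne t)
    (.of_forall hα) (hη t) (hσ t)
end

section
/- Let n ≥ 1, let a : ℝ → ℝ be differentiable with a(t) ≠ 0 for all t, let b : ℝ → ℝ, and let μ : ℝ → ℝ be twice differentiable with μ(t) ≠ 0 for all t. Define α(t) = μ'(t)/(4n·a(t)·μ(t)). Then α satisfies α' + b + 4aα² = 0 on ℝ if and only if μ satisfies μ'' − (a'/a)·μ' + 4n·a·b·μ + ((1 − n)/n)·(μ')²/μ = 0 on ℝ. -/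
/-!
Up to the factor `1 / (k n a)`, with `k = 4`, the function `α` is the logarithmic derivative of `μ`.
Multiply the Riccati equation by `k n a μ`: the derivative of `α` contributes `-μ'² / μ`, the
quadratic term contributes `μ'² / (n μ)`, and their sum is the quasilinear term
`((1 - n) / n) μ'² / μ`, which disappears exactly when `n = 1`.
-/

open scoped Topology

section LogarithmicDerivative

variable {𝕜 : Type*} [NontriviallyNormedField 𝕜]

theorem hasDerivAt_div_mul_of_ne_zero {f g h : 𝕜 → 𝕜} {f' g' h' t : 𝕜}
    (hf : HasDerivAt f f' t) (hg : HasDerivAt g g' t) (hh : HasDerivAt h h' t)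
    (hgt : g t ≠ 0) (hht : h t ≠ 0) :
    HasDerivAt (fun s => f s / (g s * h s))
      ((f' - g' / g t * f t - f t * h' / h t) / (g t * h t)) t := by
  refine (hf.fun_div (hg.fun_mul hh) (mul_ne_zero hgt hht)).congr_deriv ?_
  field_simp
  ring

theorem hasDerivAt_deriv_div_const_mul_mul {a μ : 𝕜 → 𝕜} {c t : 𝕜} (hc : c ≠ 0)
    (ha : DifferentiableAt 𝕜 a t) (hat : a t ≠ 0) (hμ : DifferentiableAt 𝕜 μ t)
    (hμ' : DifferentiableAt 𝕜 (deriv μ) t) (hμt : μ t ≠ 0) :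
    HasDerivAt (fun s => deriv μ s / (c * a s * μ s))
      ((deriv (deriv μ) t - deriv a t / a t * deriv μ t - deriv μ t ^ 2 / μ t)
        / (c * a t * μ t)) t := by
  have quotient_rule := hasDerivAt_div_mul_of_ne_zero hμ'.hasDerivAt
    (ha.hasDerivAt.const_mul c) hμ.hasDerivAt (mul_ne_zero hc hat) hμt
  rwa [mul_div_mul_left _ _ hc, ← sq] at quotient_rule

end LogarithmicDerivative

theorem mul_riccati_eq_characteristic {K : Type*} [Field K] {k n a m : K}
    (hk : k ≠ 0) (hn : n ≠ 0) (ha : a ≠ 0) (hm : m ≠ 0) (a' b m' m'' : K) :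
    k * n * a * m * ((m'' - a' / a * m' - m' ^ 2 / m) / (k * n * a * m) + b
        + k * a * (m' / (k * n * a * m)) ^ 2)
      = m'' - a' / a * m' + k * n * a * b * m + (1 - n) / n * m' ^ 2 / m := by
  have hD : k * n * a * m ≠ 0 := mul_ne_zero (mul_ne_zero (mul_ne_zero hk hn) ha) hm
  have quadratic_term :
      k * n * a * m * (k * a * (m' / (k * n * a * m)) ^ 2) = m' ^ 2 / (n * m) := by
    field_simp
  have quasilinear_term : m' ^ 2 / (n * m) - m' ^ 2 / m = (1 - n) / n * m' ^ 2 / m := by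
    field_simp
  rw [mul_add, mul_add, mul_div_cancel₀ _ hD, quadratic_term, ← quasilinear_term]
  ring

theorem stmt_7_general {𝕜 : Type*} [NontriviallyNormedField 𝕜] {k n t : 𝕜}
    (hk : k ≠ 0) (hn : n ≠ 0) {a μ α : 𝕜 → 𝕜} (b : 𝕜 → 𝕜)
    (ha : DifferentiableAt 𝕜 a t) (hat : a t ≠ 0)
    (hμ : DifferentiableAt 𝕜 μ t) (hμ' : DifferentiableAt 𝕜 (deriv μ) t) (hμt : μ t ≠ 0)
    (hα : α =ᶠ[𝓝 t] fun s => deriv μ s / (k * n * a s * μ s)) :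
    deriv α t + b t + k * a t * α t ^ 2 = 0 ↔
      deriv (deriv μ) t - deriv a t / a t * deriv μ t + k * n * a t * b t * μ t
        + (1 - n) / n * deriv μ t ^ 2 / μ t = 0 := by
  have deriv_α := hα.deriv_eq.trans
    (hasDerivAt_deriv_div_const_mul_mul (mul_ne_zero hk hn) ha hat hμ hμ' hμt).deriv
  have factor_ne_zero : k * n * a t * μ t ≠ 0 :=
    mul_ne_zero (mul_ne_zero (mul_ne_zero hk hn) hat) hμt
  rw [deriv_α, hα.eq_of_nhds, ← mul_riccati_eq_characteristic hk hn hat hμt,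
    mul_eq_zero_iff_left factor_ne_zero]

/-- Substitution lemma of Theorem 3: equivalence between the n-dimensional Riccati
equation for α and the quasilinear characteristic equation for μ. -/
theorem stmt_7
    (n : ℕ) (hn : 1 ≤ n)
    (a : ℝ → ℝ) (ha : Differentiable ℝ a) (hane : ∀ t, a t ≠ 0)
    (b : ℝ → ℝ)
    (μ : ℝ → ℝ) (hμ : Differentiable ℝ μ) (hμ' : Differentiable ℝ (deriv μ))
    (hμne : ∀ t, μ t ≠ 0)
    (α : ℝ → ℝ)
    (hα : ∀ t, α t = deriv μ t / (4 * n * a t * μ t)) :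
    (∀ t, deriv α t + b t + 4 * a t * α t ^ 2 = 0) ↔
      (∀ t, deriv (deriv μ) t - (deriv a t / a t) * deriv μ t + 4 * n * a t * b t * μ t
          + ((1 - (n : ℝ)) / n) * (deriv μ t) ^ 2 / μ t = 0) := by
  have hn0 : (n : ℝ) ≠ 0 := Nat.cast_ne_zero.2 (Nat.one_le_iff_ne_zero.1 hn)
  exact forall_congr' fun t => stmt_7_general four_ne_zero hn0 b (ha t) (hane t) (hμ t) (hμ' t)
    (hμne t) (.of_forall hα)
end

section
/- Let I ⊆ ℝ be an open interval, let a, b, c : ℝ → ℝ, and let α₀, β₀, γ₀ : ℝ → ℝ be differentiable on I satisfying, for all t ∈ I: α₀' + b + 2cα₀ + 4aα₀² = 0, β₀' + (c + 4aα₀)β₀ = 0, and γ₀' + a·β₀² = 0. Let c₀, B₀, G₀ ∈ ℝ be constants with c₀ + γ₀(t) ≠ 0 for all t ∈ I. Then the functions α := α₀ − β₀²/(4(c₀ + γ₀)), β := −B₀·β₀/(2(c₀ + γ₀)), and γ := G₀ − B₀²/(4(c₀ + γ₀)) satisfy, for all t ∈ I: α' + b + 2cα + 4aα² = 0, β' +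 (c + 4aα)β = 0, and γ' + a·β² = 0. -/
/-!
With `u = 1 / (c₀ + γ₀)`, the equation for `γ₀` reads `u' = a (β₀ u)²`. Hence `w = β₀ u` solves the
linear equation `w' + (c + 4aα) w = 0` with the *new* coefficient `α = α₀ - β₀ w / 4`.
The new `β` is a constant multiple of `w`, and the new `γ` is `G₀ - B₀² u / 4`. Finally
`δ = β₀ w / 4` is a product of solutions of the linear equations for `α₀` and `α`, so
`δ' + (2c + 4a(α₀ + α)) δ = 0`, which is the equation for the difference `α₀ - α` of two solutions
of the Riccati equation.
-/

variable {𝕜 : Type*} [NontriviallyNormedField 𝕜]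

/-- The homogeneous part of the Riccati system, `α' + b + 2cα + 4aα² = 0`,
`β' + (c + 4aα)β = 0`, `γ' + aβ² = 0`, holds at the point `t`. Each equation is solved for the
derivative, so that differentiability at `t` is part of the notion. -/
structure IsRiccatiSolutionAt (a b c α β γ : 𝕜 → 𝕜) (t : 𝕜) : Prop where
  hasDerivAt_alpha : HasDerivAt α (-(b t + 2 * c t * α t + 4 * a t * α t ^ 2)) t
  hasDerivAt_beta : HasDerivAt β (-((c t + 4 * a t * α t) * β t)) t
  hasDerivAt_gamma : HasDerivAt γ (-(a t * β t ^ 2)) t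

theorem hasDerivAt_neg_iff {f : 𝕜 → 𝕜} {y t : 𝕜} :
    HasDerivAt f (-y) t ↔ DifferentiableAt 𝕜 f t ∧ deriv f t + y = 0 := by
  rw [add_eq_zero_iff_eq_neg]
  exact ⟨fun h ↦ ⟨h.differentiableAt, h.deriv⟩, fun ⟨hf, h⟩ ↦ h ▸ hf.hasDerivAt⟩

theorem isRiccatiSolutionAt_iff {a b c α β γ : 𝕜 → 𝕜} {t : 𝕜} :
    IsRiccatiSolutionAt a b c α β γ t ↔
      (DifferentiableAt 𝕜 α t ∧ DifferentiableAt 𝕜 β t ∧ DifferentiableAt 𝕜 γ t) ∧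
      deriv α t + b t + 2 * c t * α t + 4 * a t * α t ^ 2 = 0 ∧
      deriv β t + (c t + 4 * a t * α t) * β t = 0 ∧
      deriv γ t + a t * β t ^ 2 = 0 := by
  constructor
  · rintro ⟨hα, hβ, hγ⟩
    simp only [hasDerivAt_neg_iff, ← add_assoc] at hα hβ hγ
    exact ⟨⟨hα.1, hβ.1, hγ.1⟩, hα.2, hβ.2, hγ.2⟩
  · rintro ⟨⟨dα, dβ, dγ⟩, eα, eβ, eγ⟩
    exact ⟨hasDerivAt_neg_iff.2 ⟨dα, by simpa only [add_assoc] using eα⟩,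
      hasDerivAt_neg_iff.2 ⟨dβ, eβ⟩, hasDerivAt_neg_iff.2 ⟨dγ, eγ⟩⟩

section

variable {f g : 𝕜 → 𝕜} {a b c p q k t : 𝕜}

theorem hasDerivAt_inv_const_add (hg : HasDerivAt g (-(a * p ^ 2)) t) (hne : k + g t ≠ 0) :
    HasDerivAt (fun s ↦ (k + g s)⁻¹) (a * (p * (k + g t)⁻¹) ^ 2) t := by
  refine ((hg.const_add k).fun_inv hne).congr_deriv ?_
  field_simp

theorem hasDerivAt_mul_of_linear (hf : HasDerivAt f (-(p * f t)) t)
    (hg : HasDerivAt g (-(q * g t)) t) :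
    HasDerivAt (fun s ↦ f s * g s) (-((p + q) * (f t * g t))) t :=
  (hf.fun_mul hg).congr_deriv (by ring)

theorem hasDerivAt_mul_inv_const_add (hf : HasDerivAt f (-(p * f t)) t)
    (hg : HasDerivAt g (-(a * f t ^ 2)) t) (hne : k + g t ≠ 0) :
    HasDerivAt (fun s ↦ f s * (k + g s)⁻¹)
      (-((p - a * (f t * (f t * (k + g t)⁻¹))) * (f t * (k + g t)⁻¹))) t :=
  (hf.fun_mul (hasDerivAt_inv_const_add hg hne)).congr_deriv (by ring)

theorem hasDerivAt_sub_of_riccati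
    (hf : HasDerivAt f (-(b + 2 * c * f t + 4 * a * f t ^ 2)) t)
    (hg : HasDerivAt g (-((2 * c + 4 * a * (f t + (f t - g t))) * g t)) t) :
    HasDerivAt (fun s ↦ f s - g s)
      (-(b + 2 * c * (f t - g t) + 4 * a * (f t - g t) ^ 2)) t :=
  (hf.fun_sub hg).congr_deriv (by ring)

end

theorem stmt_9_general [NeZero (2 : 𝕜)] {a b c α₀ β₀ γ₀ α β γ : 𝕜 → 𝕜} {t c₀ B₀ G₀ : 𝕜}
    (h : IsRiccatiSolutionAt a b c α₀ β₀ γ₀ t) (hne : c₀ + γ₀ t ≠ 0)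
    (hα : ∀ s, α s = α₀ s - β₀ s ^ 2 / (4 * (c₀ + γ₀ s)))
    (hβ : ∀ s, β s = -(B₀ * β₀ s) / (2 * (c₀ + γ₀ s)))
    (hγ : ∀ s, γ s = G₀ - B₀ ^ 2 / (4 * (c₀ + γ₀ s))) :
    IsRiccatiSolutionAt a b c α β γ t := by
  have four_eq : (4 : 𝕜) = 2 ^ 2 := by norm_num
  have four_ne : (4 : 𝕜) ≠ 0 := four_eq ▸ pow_ne_zero 2 two_ne_zero
  obtain rfl : α = fun s ↦ α₀ s - 4⁻¹ * (β₀ s * (β₀ s * (c₀ + γ₀ s)⁻¹)) :=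
    funext fun s ↦ by rw [hα, div_eq_mul_inv, mul_inv]; ring
  obtain rfl : β = fun s ↦ -(B₀ / 2) * (β₀ s * (c₀ + γ₀ s)⁻¹) :=
    funext fun s ↦ by rw [hβ, div_eq_mul_inv, mul_inv]; ring
  obtain rfl : γ = fun s ↦ G₀ - (B₀ / 2) ^ 2 * (c₀ + γ₀ s)⁻¹ :=
    funext fun s ↦ by rw [hγ, four_eq, div_mul_eq_div_div, ← div_pow, div_eq_mul_inv]
  have hu := hasDerivAt_inv_const_add h.hasDerivAt_gamma hne
  have hw := hasDerivAt_mul_inv_const_add h.hasDerivAt_beta h.hasDerivAt_gamma hne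
  have new_coeff : c t + 4 * a t * α₀ t - a t * (β₀ t * (β₀ t * (c₀ + γ₀ t)⁻¹)) =
      c t + 4 * a t * (α₀ t - 4⁻¹ * (β₀ t * (β₀ t * (c₀ + γ₀ t)⁻¹))) := by
    linear_combination a t * (β₀ t * (β₀ t * (c₀ + γ₀ t)⁻¹)) * mul_inv_cancel₀ four_ne
  rw [new_coeff] at hw
  have hδ := (hasDerivAt_mul_of_linear h.hasDerivAt_beta hw).const_mul 4⁻¹
  exact ⟨hasDerivAt_sub_of_riccati h.hasDerivAt_alpha (hδ.congr_deriv (by ring)),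
    (hw.const_mul _).congr_deriv (by ring),
    ((hu.const_mul _).const_sub G₀).congr_deriv (by ring)⟩

/-- Nonlinear superposition principle for the homogeneous part of the Riccati system. -/
theorem stmt_9
    (I : Set ℝ) (hIopen : IsOpen I) (hIconn : I.OrdConnected)
    (a b c : ℝ → ℝ) (α₀ β₀ γ₀ : ℝ → ℝ)
    (hα₀ : ∀ t ∈ I, DifferentiableAt ℝ α₀ t)
    (hβ₀ : ∀ t ∈ I, DifferentiableAt ℝ β₀ t)
    (hγ₀ : ∀ t ∈ I, DifferentiableAt ℝ γ₀ t)
    (e1 : ∀ t ∈ I, deriv α₀ t + b t + 2 * c t * α₀ t + 4 * a t * α₀ t ^ 2 = 0)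
    (e2 : ∀ t ∈ I, deriv β₀ t + (c t + 4 * a t * α₀ t) * β₀ t = 0)
    (e3 : ∀ t ∈ I, deriv γ₀ t + a t * β₀ t ^ 2 = 0)
    (c₀ B₀ G₀ : ℝ) (hne : ∀ t ∈ I, c₀ + γ₀ t ≠ 0)
    (α β γ : ℝ → ℝ)
    (hα : ∀ t, α t = α₀ t - β₀ t ^ 2 / (4 * (c₀ + γ₀ t)))
    (hβ : ∀ t, β t = -(B₀ * β₀ t) / (2 * (c₀ + γ₀ t)))
    (hγ : ∀ t, γ t = G₀ - B₀ ^ 2 / (4 * (c₀ + γ₀ t))) :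
    ∀ t ∈ I,
      deriv α t + b t + 2 * c t * α t + 4 * a t * α t ^ 2 = 0 ∧
      deriv β t + (c t + 4 * a t * α t) * β t = 0 ∧
      deriv γ t + a t * β t ^ 2 = 0 := by
  intro t ht
  have h₀ := isRiccatiSolutionAt_iff.2
    ⟨⟨hα₀ t ht, hβ₀ t ht, hγ₀ t ht⟩, e1 t ht, e2 t ht, e3 t ht⟩
  exact (isRiccatiSolutionAt_iff.1 (stmt_9_general h₀ (hne t ht) hα hβ hγ)).2
end

section
/- Let I ⊆ ℝ be an open interval, let a, b, c, f, g : ℝ → ℝ, and let α₀, β₀, γ₀, δ₀, ε₀, κ₀ : ℝ → ℝ be differentiable on I satisfying, for all t ∈ I: α₀' + b + 2cα₀ + 4aα₀² = 0, β₀' + (c + 4aα₀)β₀ = 0, γ₀' + a·β₀² = 0, δ₀' + (c + 4aα₀)δ₀ = f + 2α₀g, ε₀' = (g − 2aδ₀)β₀, and κ₀' = gδ₀ − aδ₀². Let c₀, B₀, D₀, E₀, K₀ ∈ ℝ be constants with c₀ + γ₀(t) ≠ 0 for all t ∈ I, and set α := α₀ − β₀²/(4(c₀ + γ₀)) and β :=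 −B₀·β₀/(2(c₀ + γ₀)). Then the functions δ := δ₀ − β₀·(D₀ + ε₀)/(2(c₀ + γ₀)), ε := E₀ − B₀·(D₀ + ε₀)/(2(c₀ + γ₀)), and κ := K₀ + κ₀ − (D₀ + ε₀)²/(4(c₀ + γ₀)) satisfy, for all t ∈ I: δ' + (c + 4aα)δ = f + 2αg, ε' = (g − 2aδ)β, and κ' = gδ − aδ². -/
/-!
Put `w = (D₀ + ε₀) / (2 (c₀ + γ₀))`. The superposed functions are then `δ = δ₀ - β₀ w`,
`ε = E₀ - B₀ w` and `κ = K₀ + κ₀ - (c₀ + γ₀) w²`, and the equations for `γ₀` and `ε₀` collapse to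
`w' = (g - 2 a δ) β₀ / (2 (c₀ + γ₀))`. Each of the three new equations follows from this by the
product rule.
-/

section InhomogeneousRiccati

variable {𝕜 : Type*} [NontriviallyNormedField 𝕜]

/-- The inhomogeneous part of the Riccati system at the point `t`: the equations satisfied by
`δ`, `ε`, `κ` relative to given `α`, `β`, each solved for the derivative, so that differentiability
at `t` is included. -/
structure InhomogeneousRiccatiAt (a c f g α β δ ε κ : 𝕜 → 𝕜) (t : 𝕜) : Prop where
  hasDerivAt_δ : HasDerivAt δ (f t + 2 * α t * g t - (c t + 4 * a t * α t) * δ t) t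
  hasDerivAt_ε : HasDerivAt ε ((g t - 2 * a t * δ t) * β t) t
  hasDerivAt_κ : HasDerivAt κ (g t * δ t - a t * δ t ^ 2) t

/-- The function `w = (D₀ + ε₀) / (2 (c₀ + γ₀))` through which the superposed `δ`, `ε`, `κ` differ
from `δ₀`, a constant and `κ₀`. -/
def superpositionRatio (γ₀ ε₀ : 𝕜 → 𝕜) (c₀ D₀ : 𝕜) (t : 𝕜) : 𝕜 :=
  (D₀ + ε₀ t) / (2 * (c₀ + γ₀ t))

theorem sq_div_four_mul_eq_mul_superpositionRatio_sq (γ₀ ε₀ : 𝕜 → 𝕜) (c₀ D₀ t : 𝕜) :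
    (D₀ + ε₀ t) ^ 2 / (4 * (c₀ + γ₀ t)) =
      (c₀ + γ₀ t) * superpositionRatio γ₀ ε₀ c₀ D₀ t ^ 2 := by
  have four_eq : (4 : 𝕜) = 2 ^ 2 := by norm_num
  rw [superpositionRatio, four_eq]
  field_simp

variable {a c f g α₀ β₀ γ₀ δ₀ ε₀ κ₀ w : 𝕜 → 𝕜} {c₀ D₀ t : 𝕜}

theorem hasDerivAt_superpositionRatio [NeZero (2 : 𝕜)]
    (hγ₀ : HasDerivAt γ₀ (-(a t * β₀ t ^ 2)) t)
    (hε₀ : HasDerivAt ε₀ ((g t - 2 * a t * δ₀ t) * β₀ t) t) (hne : c₀ + γ₀ t ≠ 0) :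
    HasDerivAt (superpositionRatio γ₀ ε₀ c₀ D₀)
      ((g t - 2 * a t * (δ₀ t - β₀ t * superpositionRatio γ₀ ε₀ c₀ D₀ t)) *
        (β₀ t / (2 * (c₀ + γ₀ t)))) t := by
  have quotient_rule := (hε₀.const_add D₀).fun_div ((hγ₀.const_add c₀).const_mul 2)
    (mul_ne_zero two_ne_zero hne)
  refine quotient_rule.congr_deriv ?_
  rw [superpositionRatio]
  field_simp
  ring

theorem hasDerivAt_δ₀_sub_β₀_mul
    (hβ₀ : HasDerivAt β₀ (-((c t + 4 * a t * α₀ t) * β₀ t)) t)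
    (hδ₀ : HasDerivAt δ₀ (f t + 2 * α₀ t * g t - (c t + 4 * a t * α₀ t) * δ₀ t) t)
    (hw : HasDerivAt w
      ((g t - 2 * a t * (δ₀ t - β₀ t * w t)) * (β₀ t / (2 * (c₀ + γ₀ t)))) t) :
    HasDerivAt (fun s ↦ δ₀ s - β₀ s * w s)
      (f t + 2 * (α₀ t - β₀ t ^ 2 / (4 * (c₀ + γ₀ t))) * g t -
        (c t + 4 * a t * (α₀ t - β₀ t ^ 2 / (4 * (c₀ + γ₀ t)))) * (δ₀ t - β₀ t * w t)) t := by
  refine (hδ₀.fun_sub (hβ₀.fun_mul hw)).congr_deriv ?_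
  have α_shift : 2 * (β₀ t ^ 2 / (4 * (c₀ + γ₀ t))) = β₀ t * (β₀ t / (2 * (c₀ + γ₀ t))) := by
    have four_eq : (4 : 𝕜) = 2 ^ 2 := by norm_num
    rw [four_eq]
    field_simp
  linear_combination (g t - 2 * a t * (δ₀ t - β₀ t * w t)) * α_shift

theorem hasDerivAt_const_add_γ₀_mul_sq [NeZero (2 : 𝕜)]
    (hγ₀ : HasDerivAt γ₀ (-(a t * β₀ t ^ 2)) t)
    (hw : HasDerivAt w
      ((g t - 2 * a t * (δ₀ t - β₀ t * w t)) * (β₀ t / (2 * (c₀ + γ₀ t)))) t)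
    (hne : c₀ + γ₀ t ≠ 0) :
    HasDerivAt (fun s ↦ (c₀ + γ₀ s) * w s ^ 2)
      ((g t - 2 * a t * (δ₀ t - β₀ t * w t)) * (β₀ t * w t) - a t * (β₀ t * w t) ^ 2) t := by
  refine ((hγ₀.const_add c₀).fun_mul (hw.fun_pow 2)).congr_deriv ?_
  field_simp
  ring

theorem stmt_10_general [NeZero (2 : 𝕜)]
    (hβ₀ : HasDerivAt β₀ (-((c t + 4 * a t * α₀ t) * β₀ t)) t)
    (hγ₀ : HasDerivAt γ₀ (-(a t * β₀ t ^ 2)) t)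
    (h₀ : InhomogeneousRiccatiAt a c f g α₀ β₀ δ₀ ε₀ κ₀ t)
    (c₀ B₀ D₀ E₀ K₀ : 𝕜) (hne : c₀ + γ₀ t ≠ 0) :
    InhomogeneousRiccatiAt a c f g
      (fun s ↦ α₀ s - β₀ s ^ 2 / (4 * (c₀ + γ₀ s)))
      (fun s ↦ -(B₀ * β₀ s) / (2 * (c₀ + γ₀ s)))
      (fun s ↦ δ₀ s - β₀ s * (D₀ + ε₀ s) / (2 * (c₀ + γ₀ s)))
      (fun s ↦ E₀ - B₀ * (D₀ + ε₀ s) / (2 * (c₀ + γ₀ s)))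
      (fun s ↦ K₀ + κ₀ s - (D₀ + ε₀ s) ^ 2 / (4 * (c₀ + γ₀ s))) t := by
  have hw := hasDerivAt_superpositionRatio (D₀ := D₀) hγ₀ h₀.hasDerivAt_ε hne
  simp only [sq_div_four_mul_eq_mul_superpositionRatio_sq, mul_div_assoc]
  constructor
  · exact hasDerivAt_δ₀_sub_β₀_mul hβ₀ h₀.hasDerivAt_δ hw
  · refine ((hw.const_mul B₀).const_sub E₀).congr_deriv ?_
    rw [superpositionRatio]
    ring
  · have hSw := hasDerivAt_const_add_γ₀_mul_sq hγ₀ hw hne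
    refine ((h₀.hasDerivAt_κ.const_add K₀).fun_sub hSw).congr_deriv ?_
    rw [superpositionRatio]
    ring

end InhomogeneousRiccati

/-- Nonlinear superposition principle for the inhomogeneous part of the Riccati system. -/
theorem stmt_10
    (I : Set ℝ) (hIopen : IsOpen I) (hIconn : I.OrdConnected)
    (a b c f g : ℝ → ℝ) (α₀ β₀ γ₀ δ₀ ε₀ κ₀ : ℝ → ℝ)
    (hα₀ : ∀ t ∈ I, DifferentiableAt ℝ α₀ t)
    (hβ₀ : ∀ t ∈ I, DifferentiableAt ℝ β₀ t)
    (hγ₀ : ∀ t ∈ I, DifferentiableAt ℝ γ₀ t)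
    (hδ₀ : ∀ t ∈ I, DifferentiableAt ℝ δ₀ t)
    (hε₀ : ∀ t ∈ I, DifferentiableAt ℝ ε₀ t)
    (hκ₀ : ∀ t ∈ I, DifferentiableAt ℝ κ₀ t)
    (e1 : ∀ t ∈ I, deriv α₀ t + b t + 2 * c t * α₀ t + 4 * a t * α₀ t ^ 2 = 0)
    (e2 : ∀ t ∈ I, deriv β₀ t + (c t + 4 * a t * α₀ t) * β₀ t = 0)
    (e3 : ∀ t ∈ I, deriv γ₀ t + a t * β₀ t ^ 2 = 0)
    (e4 : ∀ t ∈ I, deriv δ₀ t + (c t + 4 * a t * α₀ t) * δ₀ t = f t + 2 * α₀ t * g t)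
    (e5 : ∀ t ∈ I, deriv ε₀ t = (g t - 2 * a t * δ₀ t) * β₀ t)
    (e6 : ∀ t ∈ I, deriv κ₀ t = g t * δ₀ t - a t * δ₀ t ^ 2)
    (c₀ B₀ D₀ E₀ K₀ : ℝ) (hne : ∀ t ∈ I, c₀ + γ₀ t ≠ 0)
    (α β δ ε κ : ℝ → ℝ)
    (hα : ∀ t, α t = α₀ t - β₀ t ^ 2 / (4 * (c₀ + γ₀ t)))
    (hβ : ∀ t, β t = -(B₀ * β₀ t) / (2 * (c₀ + γ₀ t)))
    (hδ : ∀ t, δ t = δ₀ t - β₀ t * (D₀ + ε₀ t) / (2 * (c₀ + γ₀ t)))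
    (hε : ∀ t, ε t = E₀ - B₀ * (D₀ + ε₀ t) / (2 * (c₀ + γ₀ t)))
    (hκ : ∀ t, κ t = K₀ + κ₀ t - (D₀ + ε₀ t) ^ 2 / (4 * (c₀ + γ₀ t))) :
    ∀ t ∈ I,
      deriv δ t + (c t + 4 * a t * α t) * δ t = f t + 2 * α t * g t ∧
      deriv ε t = (g t - 2 * a t * δ t) * β t ∧
      deriv κ t = g t * δ t - a t * δ t ^ 2 := by
  intro t ht
  have hβ₀' : HasDerivAt β₀ (-((c t + 4 * a t * α₀ t) * β₀ t)) t :=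
    (hβ₀ t ht).hasDerivAt.congr_deriv (eq_neg_of_add_eq_zero_left (e2 t ht))
  have hγ₀' : HasDerivAt γ₀ (-(a t * β₀ t ^ 2)) t :=
    (hγ₀ t ht).hasDerivAt.congr_deriv (eq_neg_of_add_eq_zero_left (e3 t ht))
  have h₀ : InhomogeneousRiccatiAt a c f g α₀ β₀ δ₀ ε₀ κ₀ t :=
    ⟨(hδ₀ t ht).hasDerivAt.congr_deriv (eq_sub_of_add_eq (e4 t ht)),
      (hε₀ t ht).hasDerivAt.congr_deriv (e5 t ht), (hκ₀ t ht).hasDerivAt.congr_deriv (e6 t ht)⟩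
  have h : InhomogeneousRiccatiAt a c f g α β δ ε κ t := by
    rw [funext hα, funext hβ, funext hδ, funext hε, funext hκ]
    exact stmt_10_general hβ₀' hγ₀' h₀ c₀ B₀ D₀ E₀ K₀ (hne t ht)
  exact ⟨add_eq_of_eq_sub h.hasDerivAt_δ.deriv, h.hasDerivAt_ε.deriv, h.hasDerivAt_κ.deriv⟩
end

section
/- Let s > 0, let h : ℝ → ℝ be continuous, and let α₀, β₀, g₀, δ₀, e₀, k₀ ∈ ℝ and μ₀ > 0 with α₀ ≠ 0. On the interval I = {t : 1 + 2α₀t > 0}, define α(t) = α₀/(1 + 2α₀t), β(t) = β₀/(1 + 2α₀t), γ(t) = g₀ − β₀²t/(2(1 + 2α₀t)), δ(t) = δ₀/(1 + 2α₀t), ε(t) = e₀ − β₀δ₀t/(1 + 2α₀t), κ(t) = k₀ − δ₀²t/(2(1 + 2α₀t)) − (2/μ₀^s)·∫₀ᵗ h(r)/(1 + 2α₀r)^s dr, μ(t) = μ₀(1 + 2α₀t). Then on I these functions satisfy the modified Riccati system with a = 1/2 and b = c = d = f = g = 0: α' + 2α² = 0, β' + 2αβ = 0, γ' + β²/2 =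 0, δ' + 2αδ = 0, ε' = −βδ, κ' = −δ²/2 − 2h/μ^s, and μ' = 2αμ. Moreover, if α₀ < 0, then with T_b = −1/(2α₀) > 0 one has μ(t) > 0 for t ∈ [0, T_b) and μ(t) → 0 as t → T_b from the left, so that μ(t)^{−1/2} → +∞ as t → T_b from the left. -/
open Filter Topology

/-!
Every function of the explicit solution is built from `w t = 1 + m * t` with `m = 2 * α₀`. On
`{w > 0}` one has `(p / w)' = -(m / w) * (p / w)` and `(p * q * t / w)' = (p / w) * (q / w)`, which
are the equations for `α`, `β`, `δ` and for `γ`, `ε` and the rational part of `κ`. The set `{w > 0}`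
is an open interval containing `0`, so the integral in `κ` is differentiated by the fundamental
theorem of calculus. For `m < 0`, `w` decreases to `0` at `-(1 / m)`, which gives the blow-up.
-/

section RationalDerivatives

variable {𝕜 : Type*} [NontriviallyNormedField 𝕜] {m t : 𝕜}

theorem hasDerivAt_one_add_mul (m t : 𝕜) : HasDerivAt (fun x => 1 + m * x) m t :=
  (hasDerivAt_const_mul m).const_add 1

theorem hasDerivAt_div_one_add_mul (p : 𝕜) (ht : 1 + m * t ≠ 0) :
    HasDerivAt (fun x => p / (1 + m * x)) (-(m / (1 + m * t) * (p / (1 + m * t)))) t := by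
  refine ((hasDerivAt_const t p).fun_div (hasDerivAt_one_add_mul m t) ht).congr_deriv ?_
  field_simp
  ring

theorem hasDerivAt_mul_mul_div_one_add_mul (p q : 𝕜) (ht : 1 + m * t ≠ 0) :
    HasDerivAt (fun x => p * q * x / (1 + m * x)) (p / (1 + m * t) * (q / (1 + m * t))) t := by
  refine ((hasDerivAt_const_mul (p * q)).fun_div (hasDerivAt_one_add_mul m t) ht).congr_deriv ?_
  field_simp
  ring

theorem hasDerivAt_sq_mul_div_two_mul_one_add_mul (p : 𝕜) (ht : 1 + m * t ≠ 0) :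
    HasDerivAt (fun x => p ^ 2 * x / (2 * (1 + m * x))) ((p / (1 + m * t)) ^ 2 / 2) t := by
  have hfun : (fun x => p ^ 2 * x / (2 * (1 + m * x))) = fun x => p * p * x / (1 + m * x) / 2 := by
    funext x
    rw [sq, mul_comm 2, div_div]
  rw [hfun, sq]
  exact (hasDerivAt_mul_mul_div_one_add_mul p p ht).div_const 2

end RationalDerivatives

section IntegralDerivative

theorem hasDerivAt_integral_of_continuousOn_isOpen {E : Type*} [NormedAddCommGroup E]
    [NormedSpace ℝ E] [CompleteSpace E] {f : ℝ → E} {U : Set ℝ} {a t : ℝ} (hU : IsOpen U)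
    (hf : ContinuousOn f U) (hat : Set.uIcc a t ⊆ U) :
    HasDerivAt (fun x => ∫ r in a..x, f r) (f t) t := by
  have htU : t ∈ U := hat Set.right_mem_uIcc
  exact intervalIntegral.integral_hasDerivAt_right (hf.mono hat).intervalIntegrable
    (hf.stronglyMeasurableAtFilter hU t htU) (hf.continuousAt (hU.mem_nhds htU))

variable {m t : ℝ}

theorem isOpen_setOf_one_add_mul_pos (m : ℝ) : IsOpen {x : ℝ | 0 < 1 + m * x} :=
  isOpen_lt continuous_const (by fun_prop)

theorem ordConnected_setOf_one_add_mul_pos (m : ℝ) :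
    Set.OrdConnected {x : ℝ | 0 < 1 + m * x} := by
  have hconvex : Convex ℝ {x : ℝ | -1 < m * x} :=
    convex_halfSpace_gt (IsLinearMap.isLinearMap_smul m) (-1)
  simpa only [neg_lt_iff_pos_add'] using hconvex.ordConnected

theorem hasDerivAt_integral_div_one_add_mul_rpow {h : ℝ → ℝ} (s : ℝ)
    (hh : ContinuousOn h {x | 0 < 1 + m * x}) (ht : 0 < 1 + m * t) :
    HasDerivAt (fun x => ∫ r in (0 : ℝ)..x, h r / (1 + m * r) ^ s)
      (h t / (1 + m * t) ^ s) t := by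
  have hpow : ContinuousOn (fun r => (1 + m * r) ^ s) {x | 0 < 1 + m * x} :=
    ContinuousOn.rpow_const (by fun_prop) fun _ hx => Or.inl (ne_of_gt hx)
  have hzero : (0 : ℝ) ∈ {x : ℝ | 0 < 1 + m * x} := by simp
  exact hasDerivAt_integral_of_continuousOn_isOpen (isOpen_setOf_one_add_mul_pos m)
    (hh.div hpow fun _ hx => (Real.rpow_pos_of_pos hx s).ne')
    ((ordConnected_setOf_one_add_mul_pos m).uIcc_subset hzero ht)

end IntegralDerivative

section BlowUp

variable {m c : ℝ}

theorem one_add_mul_pos_of_lt_neg_one_div {t : ℝ} (hm : m < 0) (ht : t < -(1 / m)) :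
    0 < 1 + m * t := by
  have hroot : m * -(1 / m) = -1 := by rw [mul_neg, mul_one_div_cancel hm.ne]
  linarith [mul_lt_mul_of_neg_left ht hm]

theorem tendsto_const_mul_one_add_mul_nhdsGT_zero (hm : m < 0) (hc : 0 < c) :
    Tendsto (fun t => c * (1 + m * t)) (𝓝[<] (-(1 / m))) (𝓝[>] 0) := by
  have hroot : c * (1 + m * -(1 / m)) = 0 := by
    rw [mul_neg, mul_one_div_cancel hm.ne, add_neg_cancel, mul_zero]
  have hcont : Continuous fun t => c * (1 + m * t) := by fun_prop
  refine tendsto_nhdsWithin_iff.2 ⟨(hcont.tendsto' _ _ hroot).mono_left nhdsWithin_le_nhds, ?_⟩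
  filter_upwards [self_mem_nhdsWithin] with t ht
  exact mul_pos hc (one_add_mul_pos_of_lt_neg_one_div hm ht)

theorem tendsto_inv_sqrt_atTop_of_tendsto_nhdsGT_zero {ι : Type*} {l : Filter ι} {f : ι → ℝ}
    (hf : Tendsto f l (𝓝[>] 0)) : Tendsto (fun i => (√(f i))⁻¹) l atTop := by
  obtain ⟨hlim, hpos⟩ := tendsto_nhdsWithin_iff.1 hf
  refine Tendsto.inv_tendsto_nhdsGT_zero (tendsto_nhdsWithin_iff.2 ⟨?_, ?_⟩)
  · simpa only [Real.sqrt_zero] using hlim.sqrt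
  · exact hpos.mono fun _ => Real.sqrt_pos.2

end BlowUp

theorem stmt_15_general
    (s : ℝ)
    (h : ℝ → ℝ)
    (α₀ β₀ g₀ δ₀ e₀ k₀ μ₀ : ℝ) (hμ₀ : 0 < μ₀)
    (I : Set ℝ) (hI : I = {t : ℝ | 0 < 1 + 2 * α₀ * t})
    (hh : ContinuousOn h I)
    (α β γ δ ε κ μ : ℝ → ℝ)
    (hα : ∀ t, α t = α₀ / (1 + 2 * α₀ * t))
    (hβ : ∀ t, β t = β₀ / (1 + 2 * α₀ * t))
    (hγ : ∀ t, γ t = g₀ - β₀ ^ 2 * t / (2 * (1 + 2 * α₀ * t)))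
    (hδ : ∀ t, δ t = δ₀ / (1 + 2 * α₀ * t))
    (hε : ∀ t, ε t = e₀ - β₀ * δ₀ * t / (1 + 2 * α₀ * t))
    (hκ : ∀ t, κ t = k₀ - δ₀ ^ 2 * t / (2 * (1 + 2 * α₀ * t))
        - (2 / μ₀ ^ s) * ∫ r in (0 : ℝ)..t, h r / (1 + 2 * α₀ * r) ^ s)
    (hμ : ∀ t, μ t = μ₀ * (1 + 2 * α₀ * t)) :
    (∀ t ∈ I,
      deriv α t + 2 * α t ^ 2 = 0 ∧
      deriv β t + 2 * α t * β t = 0 ∧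
      deriv γ t + β t ^ 2 / 2 = 0 ∧
      deriv δ t + 2 * α t * δ t = 0 ∧
      deriv ε t = -(β t * δ t) ∧
      deriv κ t = -(δ t ^ 2) / 2 - 2 * h t / μ t ^ s ∧
      deriv μ t = 2 * α t * μ t) ∧
    (α₀ < 0 →
      0 < -(1 / (2 * α₀)) ∧
      (∀ t ∈ Set.Ico (0 : ℝ) (-(1 / (2 * α₀))), 0 < μ t) ∧
      Tendsto μ (𝓝[<] (-(1 / (2 * α₀)))) (𝓝 0) ∧
      Tendsto (fun t => (√(μ t))⁻¹) (𝓝[<] (-(1 / (2 * α₀)))) atTop) := by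
  obtain rfl := hI
  obtain rfl := funext hα
  obtain rfl := funext hβ
  obtain rfl := funext hγ
  obtain rfl := funext hδ
  obtain rfl := funext hε
  obtain rfl := funext hκ
  obtain rfl := funext hμ
  refine ⟨fun t (ht : 0 < 1 + 2 * α₀ * t) => ?_, fun hneg => ?_⟩
  · have hquot p := hasDerivAt_div_one_add_mul p ht.ne'
    have hsq p := hasDerivAt_sq_mul_div_two_mul_one_add_mul p ht.ne'
    have hint := hasDerivAt_integral_div_one_add_mul_rpow s hh ht
    rw [(hquot α₀).deriv, (hquot β₀).deriv, ((hsq β₀).const_sub g₀).deriv, (hquot δ₀).deriv,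
      ((hasDerivAt_mul_mul_div_one_add_mul β₀ δ₀ ht.ne').const_sub e₀).deriv,
      (((hsq δ₀).const_sub k₀).fun_sub (hint.const_mul (2 / μ₀ ^ s))).deriv,
      ((hasDerivAt_one_add_mul (2 * α₀) t).const_mul μ₀).deriv, Real.mul_rpow hμ₀.le ht.le]
    exact ⟨by ring, by ring, by ring, by ring, rfl, by ring, by field_simp⟩
  · have hm : 2 * α₀ < 0 := by linarith
    have hlim := tendsto_const_mul_one_add_mul_nhdsGT_zero hm hμ₀
    exact ⟨neg_pos.2 (one_div_neg.2 hm),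
      fun t ht => mul_pos hμ₀ (one_add_mul_pos_of_lt_neg_one_div hm ht.2),
      hlim.mono_right nhdsWithin_le_nhds, tendsto_inv_sqrt_atTop_of_tendsto_nhdsGT_zero hlim⟩

/-- Explicit blow-up example for the free coupled NLS system: the multiparameter solution
of the modified Riccati system with a = 1/2, b = c = d = f = g = 0, and its finite-time
blow-up at T_b = −1/(2α₀) when α₀ < 0. -/
theorem stmt_15
    (s : ℝ) (hs : 0 < s)
    (h : ℝ → ℝ) (hh : Continuous h)
    (α₀ β₀ g₀ δ₀ e₀ k₀ μ₀ : ℝ) (hμ₀ : 0 < μ₀) (hα₀ : α₀ ≠ 0)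
    (I : Set ℝ) (hI : I = {t : ℝ | 0 < 1 + 2 * α₀ * t})
    (α β γ δ ε κ μ : ℝ → ℝ)
    (hα : ∀ t, α t = α₀ / (1 + 2 * α₀ * t))
    (hβ : ∀ t, β t = β₀ / (1 + 2 * α₀ * t))
    (hγ : ∀ t, γ t = g₀ - β₀ ^ 2 * t / (2 * (1 + 2 * α₀ * t)))
    (hδ : ∀ t, δ t = δ₀ / (1 + 2 * α₀ * t))
    (hε : ∀ t, ε t = e₀ - β₀ * δ₀ * t / (1 + 2 * α₀ * t))
    (hκ : ∀ t, κ t = k₀ - δ₀ ^ 2 * t / (2 * (1 + 2 * α₀ * t))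
        - (2 / μ₀ ^ s) * ∫ r in (0:ℝ)..t, h r / (1 + 2 * α₀ * r) ^ s)
    (hμ : ∀ t, μ t = μ₀ * (1 + 2 * α₀ * t)) :
    (∀ t ∈ I,
      deriv α t + 2 * α t ^ 2 = 0 ∧
      deriv β t + 2 * α t * β t = 0 ∧
      deriv γ t + β t ^ 2 / 2 = 0 ∧
      deriv δ t + 2 * α t * δ t = 0 ∧
      deriv ε t = -(β t * δ t) ∧
      deriv κ t = -(δ t ^ 2) / 2 - 2 * h t / μ t ^ s ∧
      deriv μ t = 2 * α t * μ t) ∧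
    (α₀ < 0 →
      0 < -(1 / (2 * α₀)) ∧
      (∀ t ∈ Set.Ico (0 : ℝ) (-(1 / (2 * α₀))), 0 < μ t) ∧
      Tendsto μ (𝓝[<] (-(1 / (2 * α₀)))) (𝓝 0) ∧
      Tendsto (fun t => (Real.sqrt (μ t))⁻¹) (𝓝[<] (-(1 / (2 * α₀)))) atTop) := by
  exact stmt_15_general s h α₀ β₀ g₀ δ₀ e₀ k₀ μ₀ hμ₀ I hI hh.continuousOn α β γ δ ε κ μ
    hα hβ hγ hδ hε hκ hμ
end

section
/- Define on ℝ the functions α(t) = t/4, β(t) = e^{−t²}, γ(t) = −∫₀ᵗ 2e^{−2r²} dr, δ(t) = e^{−t²}, ε(t) = −∫₀ᵗ 4e^{−2r²} dr, κ(t) = −∫₀ᵗ 2e^{−2r²} dr, μ(t) = e^{3t²}. Then with n = 3, a = 2, and b(t) = −(1 + 2t²)/4, these functions satisfy for all t ∈ ℝ the n-dimensional Riccati system: α' + b + 4aα² = 0, β' + 4aαβ = 0, γ' + a·β² = 0, δ' + 4aαδ = 0, ε' + 2aβδ = 0, κ' + a·δ² = 0, and μ' = 4n·a·α·μ; moreover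 μ(t) > 0 and the integrability condition h(t) = λ·a(t)·β(t)²·μ(t) holds with λ = −6 and h(t) = −12e^{t²}. -/
/-!
Everything is driven by the phase `Φ t = t ^ 2`, which satisfies `Φ' = 4 a α`. Hence
`β = δ = exp (-Φ)` and `μ = exp (n Φ)` solve the two linear equations, while `γ`, `ε`, `κ` are
primitives of constant multiples of `exp (-2 Φ) = β ^ 2`. The integrability condition is
`β ^ 2 μ = exp ((n - 2) Φ)`, and the Riccati equation for `α` determines `b`.
-/

section Phase

variable {Φ : ℝ → ℝ} {Φ' t : ℝ}

theorem deriv_exp_neg_add_mul_eq_zero (hΦ : HasDerivAt Φ Φ' t) :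
    deriv (fun s => Real.exp (-Φ s)) t + Φ' * Real.exp (-Φ t) = 0 := by
  rw [hΦ.fun_neg.exp.deriv]
  ring

theorem deriv_exp_const_mul (c : ℝ) (hΦ : HasDerivAt Φ Φ' t) :
    deriv (fun s => Real.exp (c * Φ s)) t = c * Φ' * Real.exp (c * Φ t) := by
  rw [(hΦ.const_mul c).exp.deriv]
  ring

theorem deriv_neg_integral_exp_add_mul_sq_eq_zero (hΦ : Continuous Φ) (c t₀ t : ℝ) :
    deriv (fun s => -∫ r in t₀..s, c * Real.exp (-2 * Φ r)) t + c * Real.exp (-Φ t) ^ 2 = 0 := by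
  have exp_sq : Real.exp (-Φ t) ^ 2 = Real.exp (-2 * Φ t) := by
    rw [← Real.exp_nat_mul, Nat.cast_ofNat, mul_neg, neg_mul]
  have integrand_continuous : Continuous fun r => c * Real.exp (-2 * Φ r) := by fun_prop
  rw [deriv.fun_neg, integrand_continuous.deriv_integral, exp_sq, neg_add_cancel]

end Phase

theorem deriv_mul_const_add_riccati_eq_zero (a c t : ℝ) :
    deriv (fun s => s * c) t + -(c + 4 * a * c ^ 2 * t ^ 2) + 4 * a * (t * c) ^ 2 = 0 := by
  rw [((hasDerivAt_id' t).mul_const c).deriv]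
  ring

theorem exp_neg_sq_mul_exp_const_mul (c x : ℝ) :
    Real.exp (-x) ^ 2 * Real.exp (c * x) = Real.exp ((c - 2) * x) := by
  rw [← Real.exp_nat_mul, ← Real.exp_add]
  congr 1
  push_cast
  ring

/-- Verification of the n-dimensional Riccati-system data for the three-dimensional
coupled NLS example with n = 3, a = 2, b = −(1 + 2t²)/4, λ = −6, h = −12e^{t²}. -/
theorem stmt_17
    (n : ℕ) (hn : n = 3)
    (lam : ℝ) (hlam : lam = -6)
    (a b h : ℝ → ℝ)
    (ha : ∀ t, a t = 2) (hb : ∀ t, b t = -(1 + 2 * t ^ 2) / 4)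
    (hh : ∀ t, h t = -12 * Real.exp (t ^ 2))
    (α β γ δ ε κ μ : ℝ → ℝ)
    (hα : ∀ t, α t = t / 4)
    (hβ : ∀ t, β t = Real.exp (-t ^ 2))
    (hγ : ∀ t, γ t = -∫ r in (0:ℝ)..t, 2 * Real.exp (-2 * r ^ 2))
    (hδ : ∀ t, δ t = Real.exp (-t ^ 2))
    (hε : ∀ t, ε t = -∫ r in (0:ℝ)..t, 4 * Real.exp (-2 * r ^ 2))
    (hκ : ∀ t, κ t = -∫ r in (0:ℝ)..t, 2 * Real.exp (-2 * r ^ 2))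
    (hμ : ∀ t, μ t = Real.exp (3 * t ^ 2)) :
    ∀ t : ℝ,
      deriv α t + b t + 4 * a t * α t ^ 2 = 0 ∧
      deriv β t + 4 * a t * α t * β t = 0 ∧
      deriv γ t + a t * β t ^ 2 = 0 ∧
      deriv δ t + 4 * a t * α t * δ t = 0 ∧
      deriv ε t + 2 * a t * β t * δ t = 0 ∧
      deriv κ t + a t * δ t ^ 2 = 0 ∧
      deriv μ t = 4 * n * a t * α t * μ t ∧
      0 < μ t ∧
      h t = lam * a t * β t ^ 2 * μ t := by
  obtain rfl : α = _ := funext hα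
  obtain rfl : β = _ := funext hβ
  obtain rfl : γ = _ := funext hγ
  obtain rfl : δ = _ := funext hδ
  obtain rfl : ε = _ := funext hε
  obtain rfl : κ = _ := funext hκ
  obtain rfl : μ = _ := funext hμ
  subst hn hlam
  intro t
  simp only [ha, hb, hh, Nat.cast_ofNat]
  have phase_deriv : HasDerivAt (fun s : ℝ => s ^ 2) (4 * 2 * (t / 4)) t :=
    (hasDerivAt_pow 2 t).congr_deriv (by ring)
  have primitive_eq (c : ℝ) := deriv_neg_integral_exp_add_mul_sq_eq_zero (continuous_pow 2) c 0 t
  have beta_eq := deriv_exp_neg_add_mul_eq_zero phase_deriv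
  have integrability : Real.exp (-t ^ 2) ^ 2 * Real.exp (3 * t ^ 2) = Real.exp (t ^ 2) :=
    (exp_neg_sq_mul_exp_const_mul 3 (t ^ 2)).trans (by norm_num)
  refine ⟨?_, beta_eq, primitive_eq 2, beta_eq, ?_, primitive_eq 2, ?_, Real.exp_pos _, ?_⟩
  · simp only [div_eq_mul_inv]
    linear_combination deriv_mul_const_add_riccati_eq_zero 2 4⁻¹ t
  · linear_combination primitive_eq 4
  · linear_combination deriv_exp_const_mul 3 phase_deriv
  · linear_combination 12 * integrability
end
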